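/- arXiv:2401.02350 — 6 statements merged into one kernel-verified Lean document; each statement's English description precedes it below -/
import Mathlib

section
/- Let A be a countable commutative noetherian ring. Then there are only countably many isomorphism classes of finitely generated A-modules; that is, the set of isomorphism classes of objects of the category of finitely generated A-modules is countable. -/
/-- Let `A` be a countable commutative noetherian ring. Then there are only countably
many isomorphism classes of finitely generated `A`-modules: the skeleton of the
category of finitely generated `A`-modules is countable. -/
theorem countable_isoClasses_fgModules
    (A : Type) [CommRing A] [IsNoetherianRing A] [Countable A] :
    Countable (CategoryTheory.Skeleton (FGModuleCat A)) := by
  let F : (Σ n : ℕ, Finset (Fin n → A)) → CategoryTheory.Skeleton (FGModuleCat A) :=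
    fun p => CategoryTheory.toSkeleton
      (FGModuleCat.of A (ULift ((Fin p.1 → A) ⧸ Submodule.span A (p.2 : Set (Fin p.1 → A)))))
  have hF : Function.Surjective F := by
    intro X
    obtain ⟨M, rfl⟩ : ∃ M : FGModuleCat A, CategoryTheory.toSkeleton M = X :=
      Quotient.exists_rep X
    obtain ⟨n, f, hf⟩ := Module.Finite.exists_fin' A M
    obtain ⟨s, hs⟩ := IsNoetherian.noetherian (LinearMap.ker f)
    refine ⟨⟨n, s⟩, ?_⟩
    refine (CategoryTheory.toSkeleton_eq_toSkeleton_iff (Y := M)).mpr ⟨LinearEquiv.toFGModuleCatIso ?_⟩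
    exact ULift.moduleEquiv.trans
      ((Submodule.quotEquivOfEq _ _ hs).trans (f.quotKerEquivOfSurjective hf))
  exact hF.countable
end

section
/- Let A be a countable commutative noetherian ring. Then there are only countably many isomorphism classes of objects X in the derived category of A-modules such that every homology module H^n(X) is a finitely generated A-module and H^n(X) = 0 for all but finitely many integers n. Equivalently, the set of isomorphism classes of the bounded derived category D^b(mod A) is countable. -/
open CategoryTheory Limits Pretriangulated
open scoped ZeroObject

namespace CountDer

universe w v

lemma countable_of_ker {G H : Type*} [AddGroup G] [AddGroup H] [Countable H] (f : G →+ H)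
    (h : Countable f.ker) : Countable G := by
  classical
  choose s hs using fun y : Set.range f => y.2
  let φ : G → H × f.ker := fun g => (f g, ⟨g - s ⟨f g, g, rfl⟩, by
    simp [AddMonoidHom.mem_ker, hs]⟩)
  have : Function.Injective φ := by
    intro a b hab
    simp only [φ, Prod.mk.injEq, Subtype.mk.injEq] at hab
    obtain ⟨h1, h2⟩ := hab
    have h3 : (⟨f a, a, rfl⟩ : Set.range f) = ⟨f b, b, rfl⟩ := Subtype.ext h1
    rw [h3] at h2
    exact sub_left_injective h2
  exact this.countable

variable {A : Type} [CommRing A]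

lemma countable_of_finite [Countable A] (M : Type v) [AddCommGroup M] [Module A M]
    [Module.Finite A M] : Countable M := by
  obtain ⟨n, f, hf⟩ := Module.Finite.exists_fin' A M
  exact hf.countable

lemma countable_hom [Countable A] (M N : ModuleCat.{v} A) [Module.Finite A M]
    [Module.Finite A N] : Countable (M ⟶ N) := by
  have := countable_of_finite (A := A) N
  obtain ⟨n, f, hf⟩ := Module.Finite.exists_fin' A M
  let φ : (M ⟶ N) → (Fin n → N) := fun g i => g.hom (f (Pi.single i 1))
  have : Function.Injective φ := by
    intro a b hab
    ext x
    obtain ⟨y, rfl⟩ := hf x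
    have : a.hom.comp f = b.hom.comp f := by
      apply LinearMap.pi_ext'
      intro i
      ext
      exact congrFun hab i
    exact congrArg (fun l => l y) this
  exact this.countable

/-- countable list of f.g. modules -/
lemma exists_modules [IsNoetherianRing A] [Countable A] :
    ∃ S : Set (ModuleCat.{v} A), S.Countable ∧ (∀ M ∈ S, Module.Finite A M) ∧
      ∀ M : ModuleCat.{v} A, Module.Finite A M → ∃ N ∈ S, Nonempty (M ≅ N) := by
  have hsub : ∀ n : ℕ, Countable (Submodule A (Fin n → A)) := by
    intro n
    have : Function.Surjective
        (fun s : Finset (Fin n → A) => Submodule.span A (s : Set (Fin n → A))) := by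
      intro N
      obtain ⟨s, hs⟩ := IsNoetherian.noetherian N
      exact ⟨s, hs⟩
    exact this.countable
  let F : (Σ n : ℕ, Submodule A (Fin n → A)) → ModuleCat.{v} A :=
    fun p => ModuleCat.of A (ULift.{v} ((Fin p.1 → A) ⧸ p.2))
  refine ⟨Set.range F, Set.countable_range F, ?_, ?_⟩
  · rintro _ ⟨p, rfl⟩
    exact Module.Finite.equiv (ULift.moduleEquiv (R := A) (M := (Fin p.1 → A) ⧸ p.2)).symm
  · intro M hM
    obtain ⟨n, f, hf⟩ := Module.Finite.exists_fin' A M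
    refine ⟨_, ⟨⟨n, LinearMap.ker f⟩, rfl⟩, ⟨LinearEquiv.toModuleIso ?_⟩⟩
    exact (f.quotKerEquivOfSurjective hf).symm.trans ULift.moduleEquiv.symm

lemma exists_ses [IsNoetherianRing A] (M : ModuleCat.{v} A) [Module.Finite A M] :
    ∃ (S : ShortComplex (ModuleCat.{v} A)), S.ShortExact ∧ Projective S.X₂ ∧
      Module.Finite A S.X₁ ∧ S.X₃ = M := by
  obtain ⟨n, f, hf⟩ := Module.Finite.exists_fin' A M
  let g : ULift.{v} (Fin n → A) →ₗ[A] M := f.comp ULift.moduleEquiv.toLinearMap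
  have hg : Function.Surjective g := hf.comp ULift.moduleEquiv.surjective
  have hfin : Module.Finite A (ULift.{v} (Fin n → A)) :=
    Module.Finite.equiv (ULift.moduleEquiv (R := A)).symm
  have hproj : Module.Projective A (ULift.{v} (Fin n → A)) :=
    Module.Projective.of_equiv (ULift.moduleEquiv (R := A)).symm
  let S : ShortComplex (ModuleCat.{v} A) :=
    ShortComplex.mk (ModuleCat.ofHom (LinearMap.ker g).subtype) (ModuleCat.ofHom g) (by
      ext x; exact x.2)
  refine ⟨S, ?_, ?_, ?_, rfl⟩
  · exact {
      exact := by
        rw [ShortComplex.moduleCat_exact_iff]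
        intro x hx
        exact ⟨⟨x, hx⟩, rfl⟩
      mono_f := (ModuleCat.mono_iff_injective _).2 Subtype.val_injective
      epi_g := (ModuleCat.epi_iff_surjective _).2 hg }
  · exact (IsProjective.iff_projective (R := A) (ULift.{v} (Fin n → A))).1 hproj
  · exact inferInstanceAs (Module.Finite A (LinearMap.ker g))

lemma countable_ext [IsNoetherianRing A] [Countable A] [HasExt.{w} (ModuleCat.{v} A)]
    (N : ModuleCat.{v} A) [Module.Finite A N] (n : ℕ) :
    ∀ (M : ModuleCat.{v} A) [Module.Finite A M], Countable (Abelian.Ext.{w} M N n) := by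
  induction n with
  | zero =>
    intro M _
    have := countable_hom M N
    exact Abelian.Ext.homEquiv₀.injective.countable
  | succ n ih =>
    intro M _
    obtain ⟨S, hS, hP, hF, rfl⟩ := exists_ses M
    have := ih S.X₁
    have : Function.Surjective (fun x : Abelian.Ext.{w} S.X₁ N n =>
        hS.extClass.comp x (add_comm 1 n)) := by
      intro y
      exact Abelian.Ext.contravariant_sequence_exact₃ hS N y
        (Abelian.Ext.eq_zero_of_projective _) (add_comm 1 n)
    exact this.countable

variable [HasDerivedCategory.{w} (ModuleCat.{v} A)]

open DerivedCategory

local notation "D" => DerivedCategory (ModuleCat A)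

lemma countable_single [IsNoetherianRing A] [Countable A] (M N : ModuleCat.{v} A)
    [Module.Finite A M] [Module.Finite A N] (n m : ℤ) :
    Countable ((singleFunctor (ModuleCat A) n).obj M ⟶ (singleFunctor (ModuleCat A) m).obj N) := by
  by_cases h : n < m
  · have : Subsingleton
      ((singleFunctor (ModuleCat A) n).obj M ⟶ (singleFunctor (ModuleCat A) m).obj N) :=
      ⟨fun a b => by rw [TStructure.t.zero a n m h, TStructure.t.zero b n m h]⟩
    infer_instance
  · obtain ⟨k, hk⟩ := Int.eq_ofNat_of_zero_le (show 0 ≤ n - m by lia)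
    have := hasExt_of_hasDerivedCategory (ModuleCat.{v} A)
    have := countable_ext N k M
    have e : ShiftedHom ((singleFunctor (ModuleCat A) 0).obj M)
      ((singleFunctor (ModuleCat A) 0).obj N) (k : ℤ) ≃
      ((singleFunctor (ModuleCat A) n).obj M ⟶ (singleFunctor (ModuleCat A) m).obj N) := by
      refine Equiv.trans ?_ (Functor.FullyFaithful.homEquiv
        (Functor.FullyFaithful.ofFullyFaithful (shiftFunctor (D) n))).symm
      refine Iso.homCongr ?_ ?_
      · exact (((singleFunctors (ModuleCat A)).shiftIso n 0 n (by simp)).app M).symm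
      · exact (((singleFunctors (ModuleCat A)).shiftIso (k : ℤ) (-k) 0 (by simp)).app N) ≪≫
          (((singleFunctors (ModuleCat A)).shiftIso n (-k) m (by lia)).app N).symm
    exact (Abelian.Ext.homEquiv.trans e).symm.injective.countable

/-- countably many maps from every shifted f.g. module -/
def P (X : D) : Prop := ∀ (M : ModuleCat.{v} A) (n : ℤ), Module.Finite A M →
  Countable ((singleFunctor (ModuleCat A) n).obj M ⟶ X)

lemma P_ext (T : Triangle (D)) (hT : T ∈ distTriang (D)) (h1 : P T.obj₁) (h3 : P T.obj₃) :
    P T.obj₂ := by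
  intro M n hM
  have := h1 M n hM
  have := h3 M n hM
  let f : ((singleFunctor (ModuleCat A) n).obj M ⟶ T.obj₂) →+
    ((singleFunctor (ModuleCat A) n).obj M ⟶ T.obj₃) := Preadditive.rightComp _ T.mor₂
  apply countable_of_ker f
  let g : ((singleFunctor (ModuleCat A) n).obj M ⟶ T.obj₁) → f.ker :=
    fun a => ⟨a ≫ T.mor₁, by
      change (a ≫ T.mor₁) ≫ T.mor₂ = 0
      rw [Category.assoc, comp_distTriang_mor_zero₁₂ T hT, comp_zero]⟩
  have : Function.Surjective g := by
    rintro ⟨x, hx⟩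
    obtain ⟨y, hy⟩ := Triangle.coyoneda_exact₂ T hT x hx
    exact ⟨y, Subtype.ext hy.symm⟩
  exact this.countable

lemma P_iso {X Y : D} (e : X ≅ Y) (h : P X) : P Y := by
  intro M n hM
  have := h M n hM
  exact ((Iso.refl _).homCongr e).symm.injective.countable

lemma P_shift {X : D} (h : P X) (M : ModuleCat.{v} A) (n : ℤ) (hM : Module.Finite A M) :
    Countable ((singleFunctor (ModuleCat A) n).obj M ⟶ X⟦(1 : ℤ)⟧) := by
  have := h M (n + 1) hM
  have e : ((singleFunctor (ModuleCat A) (n + 1)).obj M ⟶ X) ≃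
      ((singleFunctor (ModuleCat A) n).obj M ⟶ X⟦(1 : ℤ)⟧) :=
    (Functor.FullyFaithful.homEquiv
        (Functor.FullyFaithful.ofFullyFaithful (shiftFunctor (D) (1 : ℤ)))).trans
      (Iso.homCongr (((singleFunctors (ModuleCat A)).shiftIso 1 n (n + 1) (by lia)).app M)
        (Iso.refl _))
  exact e.symm.injective.countable

lemma isZero_mid (S : ShortComplex (ModuleCat.{v} A)) (hS : S.Exact) (h1 : IsZero S.X₁)
    (h3 : IsZero S.X₃) : IsZero S.X₂ :=
  hS.isZero_of_both_zeros (h1.eq_of_src _ _) (h3.eq_of_tgt _ _)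

lemma finite_mid [IsNoetherianRing A] (S : ShortComplex (ModuleCat.{v} A)) (hS : S.Exact)
    (h1 : Module.Finite A S.X₁)
    (h3 : Module.Finite A S.X₃) : Module.Finite A S.X₂ := by
  have := isNoetherian_of_range_eq_ker (M := S.X₁) (N := S.X₂) (P := S.X₃) S.f.hom S.g.hom
    (hS.moduleCat_range_eq_ker)
  infer_instance

/-- the objects in the interval -/
def Cls (a b : ℤ) (X : D) : Prop :=
  X.IsGE a ∧ X.IsLE b ∧ ∀ n : ℤ, Module.Finite A ((homologyFunctor (ModuleCat A) n).obj X)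

lemma step_tri [IsNoetherianRing A] (a b : ℤ) (hab : a ≤ b) (X : D) (hX : Cls a b X) :
    ∃ (X' : D) (N : ModuleCat.{v} A) (f : X' ⟶ X)
      (g : X ⟶ (singleFunctor (ModuleCat A) b).obj N)
      (h : (singleFunctor (ModuleCat A) b).obj N ⟶ X'⟦(1 : ℤ)⟧),
      Cls a (b - 1) X' ∧ Module.Finite A N ∧ Triangle.mk f g h ∈ distTriang (D) := by
  obtain ⟨hGE, hLE, hfin⟩ := hX
  obtain ⟨X', X'', h', h'', f, g, h, hT⟩ := TStructure.t.exists_triangle X (b - 1) b (by lia)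
  have hX' : X'.IsLE (b - 1) := ⟨h'⟩
  have hX'' : X''.IsGE b := ⟨h''⟩
  have hX''le : X''.IsLE b := by
    rw [isLE_iff]
    intro i hi
    exact isZero_mid _ (HomologySequence.exact₃ _ hT i (i + 1) rfl)
      (isZero_of_isLE X b i hi) (isZero_of_isLE X' (b - 1) (i + 1) (by lia))
  have hX'ge : X'.IsGE a := by
    rw [isGE_iff]
    intro i hi
    exact isZero_mid _ (HomologySequence.exact₁ _ hT (i - 1) i (by lia))
      (isZero_of_isGE X'' b (i - 1) (by lia)) (isZero_of_isGE X a i hi)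
  have fin0 : ∀ Z : ModuleCat.{v} A, IsZero Z → Module.Finite A Z := by
    intro Z hZ
    have := ModuleCat.subsingleton_of_isZero hZ
    infer_instance
  have hX'fin : ∀ n : ℤ, Module.Finite A ((homologyFunctor (ModuleCat A) n).obj X') := by
    intro i
    by_cases hi : i ≤ b - 1
    · exact finite_mid _ (HomologySequence.exact₁ _ hT (i - 1) i (by lia))
        (fin0 _ (isZero_of_isGE X'' b (i - 1) (by lia))) (hfin i)
    · exact fin0 _ (isZero_of_isLE X' (b - 1) i (by lia))
  have hX''fin : Module.Finite A ((homologyFunctor (ModuleCat A) b).obj X'') :=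
    finite_mid _ (HomologySequence.exact₃ _ hT b (b + 1) rfl) (hfin b)
      (fin0 _ (isZero_of_isLE X' (b - 1) (b + 1) (by lia)))
  obtain ⟨N, ⟨e⟩⟩ := exists_iso_singleFunctor_obj_of_isGE_of_isLE X'' b
  refine ⟨X', N, f, g ≫ e.hom, e.inv ≫ h, ⟨hX'ge, hX', hX'fin⟩, ?_, ?_⟩
  · exact Module.Finite.equiv ((homologyFunctor (ModuleCat A) b).mapIso e ≪≫
      (singleFunctorCompHomologyFunctorIso (ModuleCat A) b).app N).toLinearEquiv
  · refine isomorphic_distinguished _ hT _ ?_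
    exact Triangle.isoMk _ _ (Iso.refl _) (Iso.refl _) e.symm
      (by change f ≫ 𝟙 X = 𝟙 X' ≫ f; simp)
      (by change (g ≫ e.hom) ≫ e.inv = 𝟙 X ≫ g; simp)
      (by change (e.inv ≫ h) ≫ (shiftFunctor (D) (1 : ℤ)).map (𝟙 X') = e.inv ≫ h; simp)

lemma main [IsNoetherianRing A] [Countable A] (a : ℤ) (k : ℕ) :
    ∃ S : Set (D), S.Countable ∧ (∀ Y ∈ S, P Y) ∧
      ∀ X : D, Cls a (a + k - 1) X → ∃ Y ∈ S, Nonempty (X ≅ Y) := by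
  induction k with
  | zero =>
    refine ⟨{0}, Set.countable_singleton _, ?_, ?_⟩
    · rintro _ rfl M n hM
      have : Subsingleton ((singleFunctor (ModuleCat A) n).obj M ⟶ (0 : D)) :=
        ⟨fun a b => (isZero_zero _).eq_of_tgt a b⟩
      infer_instance
    · rintro X ⟨h1, h2, -⟩
      refine ⟨0, rfl, ⟨IsZero.iso ?_ (isZero_zero _)⟩⟩
      rw [IsZero.iff_id_eq_zero]
      exact TStructure.t.zero _ (a + (0 : ℕ) - 1) a (by simp)
  | succ k ih =>
    obtain ⟨S, hS, hP, hcov⟩ := ih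
    obtain ⟨R, hR, hRfin, hRcov⟩ := exists_modules.{v} (A := A)
    set b : ℤ := a + (k + 1 : ℕ) - 1 with hb
    choose Z f g hZ using fun (M : ModuleCat.{v} A) (Y : D)
      (h : (singleFunctor (ModuleCat A) b).obj M ⟶ Y⟦(1 : ℤ)⟧) => distinguished_cocone_triangle₂ h
    refine ⟨⋃ M ∈ R, ⋃ Y ∈ S, Set.range (Z M Y), ?_, ?_, ?_⟩
    · refine hR.biUnion fun M hM => hS.biUnion fun Y hY => ?_
      have := P_shift (hP Y hY) M b (hRfin M hM)
      exact Set.countable_range _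
    · intro X hX
      simp only [Set.mem_iUnion] at hX
      obtain ⟨M, hM, Y, hY, h, rfl⟩ := hX
      have := hRfin M hM
      exact P_ext _ (hZ M Y h) (hP Y hY) (fun L n hL => countable_single L M n b)
    · intro X hX
      obtain ⟨X', N, f', g', h', hX', hN, hT⟩ := step_tri a b (by lia) X hX
      obtain ⟨Y, hY, ⟨e⟩⟩ := hcov X' (by
        have : a + (k : ℤ) - 1 = b - 1 := by lia
        rw [this]; exact hX')
      obtain ⟨M, hM, ⟨e'⟩⟩ := hRcov N hN
      let h := (singleFunctor (ModuleCat A) b).map e'.inv ≫ h' ≫ e.hom⟦(1 : ℤ)⟧'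
      refine ⟨Z M Y h, ?_, ⟨?_⟩⟩
      · simp only [Set.mem_iUnion]
        exact ⟨M, hM, Y, hY, h, rfl⟩
      · refine Triangle.π₂.mapIso (isoTriangleOfIso₁₃ _ _ hT (hZ M Y h) e
          ((singleFunctor (ModuleCat A) b).mapIso e') ?_)
        change h' ≫ (shiftFunctor (D) (1 : ℤ)).map e.hom =
          (singleFunctor (ModuleCat A) b).map e'.hom ≫ h
        simp only [h]
        rw [← Functor.map_comp_assoc, e'.hom_inv_id, CategoryTheory.Functor.map_id, Category.id_comp]

end CountDer




/-- Let `A` be a countable commutative noetherian ring. Then there are only countably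
many isomorphism classes of objects `X` of the derived category of `A`-modules whose
homology modules are all finitely generated and vanish in all but finitely many
degrees: there is a countable family of such objects meeting every isomorphism class. -/
theorem countable_isoClasses_bounded_derivedCategory
    (A : Type) [CommRing A] [IsNoetherianRing A] [Countable A]
    [HasDerivedCategory (ModuleCat A)] :
    ∃ (ι : Type) (_ : Countable ι)
      (Y : ι → DerivedCategory (ModuleCat A)),
      ∀ X : DerivedCategory (ModuleCat A),
        (∀ n : ℤ, Module.Finite A ((DerivedCategory.homologyFunctor (ModuleCat A) n).obj X)) →
        {n : ℤ | ¬ IsZero ((DerivedCategory.homologyFunctor (ModuleCat A) n).obj X)}.Finite →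
        ∃ i, Nonempty (X ≅ Y i) := by
  have hcov : ∀ p : ℤ × ℕ, _ := fun p => CountDer.main (A := A) p.1 p.2
  choose S hS _ hX using hcov
  have hc : (⋃ p, S p).Countable := Set.countable_iUnion hS
  have := hc.to_subtype
  refine ⟨Shrink.{0} (⋃ p, S p : Set _), (equivShrink _).symm.injective.countable,
    fun i => ((equivShrink _).symm i).1, ?_⟩
  intro X hfin hbd
  obtain ⟨u, hu⟩ := hbd.bddAbove
  obtain ⟨l, hl⟩ := hbd.bddBelow
  obtain ⟨Y, hY, e⟩ := hX (l, (u - l + 1).toNat) X ⟨by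
    rw [DerivedCategory.isGE_iff]
    intro i hi
    by_contra h
    have := hl h
    dsimp at hi
    lia, by
    rw [DerivedCategory.isLE_iff]
    intro i hi
    by_contra h
    have := hu h
    dsimp at hi
    lia, hfin⟩
  refine ⟨equivShrink _ ⟨Y, Set.mem_iUnion.2 ⟨_, hY⟩⟩, ?_⟩
  simpa using e
end

section
/- Let A be a commutative noetherian local ring that is complete with respect to its maximal ideal (i.e., A is m-adically complete, where m is the maximal ideal). If the Krull dimension of A is at least 2, then the set of prime ideals of A of height one is uncountable. -/
theorem aux_closed (A : Type) [CommRing A] [IsNoetherianRing A] [IsLocalRing A]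
    (P : Ideal A) [P.IsPrime] (x : A) (hx : x ∉ P) :
    ∃ k, x ∉ P ⊔ IsLocalRing.maximalIdeal A ^ k := by
  by_contra! hc
  apply hx
  have : Nontrivial (A ⧸ P) := Ideal.Quotient.nontrivial_iff.mpr Ideal.IsPrime.ne_top'
  have hsurj : Function.Surjective (Ideal.Quotient.mk P) := Ideal.Quotient.mk_surjective
  have : IsLocalRing (A ⧸ P) := IsLocalRing.of_surjective' _ hsurj
  have hne : (IsLocalRing.maximalIdeal A).map (Ideal.Quotient.mk P) ≠ ⊤ := by
    intro h
    have h2 := congrArg (Ideal.comap (Ideal.Quotient.mk P)) h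
    rw [Ideal.comap_map_of_surjective _ hsurj, Ideal.comap_top, ← RingHom.ker_eq_comap_bot,
      Ideal.mk_ker, sup_eq_left.mpr (IsLocalRing.le_maximalIdeal Ideal.IsPrime.ne_top')] at h2
    exact Ideal.IsPrime.ne_top' h2
  rw [← Ideal.Quotient.eq_zero_iff_mem, ← Ideal.mem_bot,
    ← Ideal.iInf_pow_eq_bot_of_isLocalRing _ hne, Ideal.mem_iInf]
  intro k
  have := Ideal.mem_map_of_mem (Ideal.Quotient.mk P) (hc k)
  rwa [Ideal.map_sup, Ideal.map_quotient_self, bot_sup_eq, Ideal.map_pow] at this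

theorem aux_avoid (A : Type) [CommRing A] [IsNoetherianRing A] [IsLocalRing A]
    [IsAdicComplete (IsLocalRing.maximalIdeal A) A] (P : ℕ → Ideal A)
    (hP : ∀ n, (P n).IsPrime) (hne : ∀ n, ¬ IsLocalRing.maximalIdeal A ≤ P n) :
    ∃ x ∈ IsLocalRing.maximalIdeal A, ∀ n, x ∉ P n := by
  set m := IsLocalRing.maximalIdeal A with hm
  have step : ∀ (n : ℕ) (s : A × ℕ), ∃ t : A × ℕ, t.1 - s.1 ∈ m ^ s.2 ∧ s.2 < t.2 ∧
      t.1 ∉ P n ⊔ m ^ t.2 := by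
    rintro n ⟨x, k⟩
    have := hP n
    obtain ⟨y, hy, hyP⟩ : ∃ y, y - x ∈ m ^ k ∧ y ∉ P n := by
      by_cases hx : x ∈ P n
      · have : ¬ m ^ k ≤ P n := fun h => hne n (Ideal.IsPrime.le_of_pow_le h)
        obtain ⟨z, hz, hzP⟩ := SetLike.not_le_iff_exists.mp this
        exact ⟨x + z, by simpa using hz, fun h => hzP ((Ideal.add_mem_iff_right _ hx).mp h)⟩
      · exact ⟨x, by simp, hx⟩
    obtain ⟨l, hl⟩ := aux_closed A (P n) y hyP
    refine ⟨(y, max l (k+1)), hy, by simp, fun h => hl ?_⟩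
    have hle : P n ⊔ m ^ (max l (k+1)) ≤ P n ⊔ m ^ l :=
      sup_le_sup_left (Ideal.pow_le_pow_right (le_max_left _ _)) _
    exact hle h
  choose F hF1 hF2 hF3 using step
  let s : ℕ → A × ℕ := fun n => Nat.rec (0, 1) F n
  have hs : ∀ n, s (n+1) = F n (s n) := fun n => rfl
  have hk : ∀ n, n + 1 ≤ (s n).2 := by
    intro n
    induction n with
    | zero => exact le_refl 1
    | succ n ih => have := hF2 n (s n); rw [hs]; omega
  have hmono : StrictMono fun n => (s n).2 := strictMono_nat_of_lt_succ fun n => hF2 n (s n)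
  have hcau : ∀ i j, i ≤ j → (s j).1 - (s i).1 ∈ m ^ (s i).2 := by
    intro i j hij
    induction j, hij using Nat.le_induction with
    | base => simp
    | succ j hj ih =>
      have h1 := Ideal.pow_le_pow_right (I := m) (hmono.monotone hj) (hF1 j (s j))
      have := Ideal.add_mem _ h1 ih
      rw [hs]
      simpa using this
  obtain ⟨L, hL⟩ := IsPrecomplete.prec' (I := m) (M := A) (fun n => (s n).1) (by
    intro i j hij
    apply SModEq.symm
    rw [SModEq.sub_mem]
    simpa using Ideal.pow_le_pow_right (by have := hk i; omega) (hcau i j hij))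
  have hL2 : ∀ n, L - (s n).1 ∈ m ^ (s n).2 := by
    intro n
    have h1 := SModEq.sub_mem.mp (hL (s n).2).symm
    have h1 : L - (s (s n).2).1 ∈ m ^ (s n).2 := by simpa using h1
    have h2 := hcau n (s n).2 (by have := hk n; omega)
    simpa using Ideal.add_mem _ h1 h2
  refine ⟨L, ?_, fun n hn => hF3 n (s n) ?_⟩
  · simpa [s] using hL2 0
  · have h1 := hL2 (n+1)
    rw [hs] at h1
    have := Ideal.sub_mem _ (Ideal.mem_sup_left (T := m ^ (F n (s n)).2) hn)
      (Ideal.mem_sup_right (S := P n) h1)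
    simpa using this

/-- Let `A` be a complete commutative noetherian local ring. If the Krull dimension of
`A` is at least `2`, then the set of height-one prime ideals of `A` is uncountable. -/
theorem uncountable_height_one_primes
    (A : Type) [CommRing A] [IsNoetherianRing A] [IsLocalRing A]
    [IsAdicComplete (IsLocalRing.maximalIdeal A) A]
    (h : 2 ≤ ringKrullDim A) :
    ¬ Set.Countable {p : PrimeSpectrum A | Order.height p = 1} := by
  intro hc
  have hfin : Set.Countable {p : PrimeSpectrum A | Order.height p = 0} := by
    refine ((minimalPrimes.finite_of_isNoetherianRing A).countable.preimage
      (f := PrimeSpectrum.asIdeal) (fun p q h => PrimeSpectrum.ext h)).mono ?_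
    intro p hp
    have hp : Order.height p = 0 := hp
    rw [← PrimeSpectrum.height_eq_orderHeight, Ideal.height_eq_zero_iff] at hp
    exact hp
  have hS := hc.union hfin
  have key : ∀ x ∈ IsLocalRing.maximalIdeal A, ∃ p ∈ {p : PrimeSpectrum A | Order.height p = 1} ∪
      {p : PrimeSpectrum A | Order.height p = 0}, x ∈ p.asIdeal := by
    intro x hx
    obtain ⟨p, hp, -⟩ := Ideal.exists_minimalPrimes_le
      (I := Ideal.span {x}) (J := IsLocalRing.maximalIdeal A) (by simpa [Ideal.span_le] using hx)
    have h1 := Ideal.height_le_one_of_isPrincipal_of_mem_minimalPrimes (Ideal.span {x}) p hp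
    refine ⟨⟨p, hp.1.1⟩, ?_, hp.1.2 (Ideal.mem_span_singleton_self x)⟩
    have h2 : Order.height (⟨p, hp.1.1⟩ : PrimeSpectrum A) ≤ 1 := by
      rwa [← PrimeSpectrum.height_eq_orderHeight]
    rcases h2.eq_or_lt with h3 | h3
    · exact Or.inl h3
    · exact Or.inr (Order.lt_one_iff.mp h3)
  obtain ⟨p0, hp0, -⟩ := key 0 (Ideal.zero_mem _)
  obtain ⟨f, hf⟩ := hS.exists_eq_range ⟨p0, hp0⟩
  obtain ⟨x, hx, hxn⟩ := aux_avoid A (fun n => (f n).asIdeal) (fun n => (f n).2) (by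
    intro n hle
    have hmem : f n ∈ {p : PrimeSpectrum A | Order.height p = 1} ∪
      {p : PrimeSpectrum A | Order.height p = 0} := hf ▸ ⟨n, rfl⟩
    have h1 : (f n).asIdeal.height ≤ 1 := by
      rw [PrimeSpectrum.height_eq_orderHeight]
      rcases hmem with h | h
      · exact le_of_eq h
      · exact (le_of_eq h).trans zero_le_one
    have h2 := (Ideal.height_mono hle).trans h1
    rw [← IsLocalRing.maximalIdeal_height_eq_ringKrullDim] at h
    have h3 : (2 : ℕ∞) ≤ (IsLocalRing.maximalIdeal A).height := WithBot.coe_le_coe.mp h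
    exact absurd (h3.trans h2) (by decide))
  obtain ⟨p, hp, hxp⟩ := key x hx
  rw [hf] at hp
  obtain ⟨n, rfl⟩ := hp
  exact hxn n hxp
end

section
/- Countable prime avoidance: let A be a commutative noetherian local ring that is complete with respect to its maximal ideal, let (p_i)_{i ∈ ℕ} be a countable family of prime ideals of A, and let I be an ideal of A with I ⊆ ⋃_i p_i. Then I ⊆ p_i for some i. -/
theorem cpa_closed {A : Type} [CommRing A] [IsNoetherianRing A] [IsLocalRing A]
    (J : Ideal A) (x : A) (hx : x ∉ J) :
    ∃ k : ℕ, ∀ y, y - x ∈ IsLocalRing.maximalIdeal A ^ k → y ∉ J := by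
  by_contra! h
  apply hx
  rw [← Ideal.Quotient.eq_zero_iff_mem]
  have hH : IsHausdorff (IsLocalRing.maximalIdeal A) (A ⧸ J) := inferInstance
  refine hH.haus _ fun n => ?_
  obtain ⟨y, hy, hyJ⟩ := h n
  rw [SModEq.zero]
  have h1 : Ideal.Quotient.mk J x = (x - y) • (1 : A ⧸ J) := by
    rw [Algebra.smul_def, mul_one]
    change _ = Ideal.Quotient.mk J (x - y)
    rw [map_sub, Ideal.Quotient.eq_zero_iff_mem.mpr hyJ, sub_zero]
  rw [h1]
  refine Submodule.smul_mem_smul ?_ trivial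
  rw [← neg_sub]
  exact neg_mem hy

/-- Countable prime avoidance: let `A` be a complete commutative noetherian local
ring, `(p i)` a countable family of prime ideals of `A`, and `I` an ideal of `A`
contained in the union of the `p i`. Then `I ⊆ p i` for some `i`. -/
theorem countable_prime_avoidance
    (A : Type) [CommRing A] [IsNoetherianRing A] [IsLocalRing A]
    [IsAdicComplete (IsLocalRing.maximalIdeal A) A]
    (p : ℕ → Ideal A) (hp : ∀ i, (p i).IsPrime)
    (I : Ideal A) (hI : (I : Set A) ⊆ ⋃ i, (p i : Set A)) :
    ∃ i, I ≤ p i := by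
  by_contra! hcon
  have hIt : I ≠ ⊤ := by
    rintro rfl
    obtain ⟨i, hi⟩ := Set.mem_iUnion.mp (hI (show (1 : A) ∈ ((⊤ : Ideal A) : Set A) from trivial))
    exact (hp i).ne_top ((Ideal.eq_top_iff_one _).mpr hi)
  have hIm := IsLocalRing.le_maximalIdeal hIt
  set m := IsLocalRing.maximalIdeal A with hm
  have step : ∀ (n : ℕ) (s : I × ℕ), ∃ t : I × ℕ, (t.1 : A) - s.1 ∈ m ^ s.2 ∧ s.2 < t.2 ∧
      ∀ y, y - (t.1 : A) ∈ m ^ t.2 → y ∉ p n := by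
    rintro n ⟨⟨x, hx⟩, k⟩
    have h1 : ∃ x' ∈ I, x' - x ∈ m ^ k ∧ x' ∉ p n := by
      by_cases hxp : x ∈ p n
      · have : ¬ I * m ^ k ≤ p n := by
          intro h
          rcases (hp n).mul_le.mp h with h | h
          · exact hcon n h
          · exact hcon n (hIm.trans ((hp n).le_of_pow_le h))
        obtain ⟨z, hz, hzp⟩ := SetLike.not_le_iff_exists.mp this
        have hz1 : z ∈ I := (Ideal.mul_le_left : I * m ^ k ≤ I) hz
        have hz2 : z ∈ m ^ k := (Ideal.mul_le_right : I * m ^ k ≤ m ^ k) hz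
        refine ⟨x + z, I.add_mem hx hz1, ?_, ?_⟩
        · simpa using hz2
        · rwa [(p n).add_mem_iff_right hxp]
      · exact ⟨x, hx, by simp, hxp⟩
    obtain ⟨x', hx', hxx, hxp⟩ := h1
    obtain ⟨l, hl⟩ := cpa_closed (p n) x' hxp
    refine ⟨⟨⟨x', hx'⟩, max l (k + 1)⟩, hxx, by simp, fun y hy => hl y ?_⟩
    exact Ideal.pow_le_pow_right (le_max_left _ _) hy
  choose g hg1 hg2 hg3 using step
  let s : ℕ → I × ℕ := fun n => Nat.rec (0, 0) (fun n t => g n t) n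
  have hs : ∀ n, s (n + 1) = g n (s n) := fun n => rfl
  have hmono : StrictMono fun n => (s n).2 := strictMono_nat_of_lt_succ fun n => by
    simp only [hs]; exact hg2 _ _
  have hc : ∀ a b, a ≤ b → ((s b).1 : A) - (s a).1 ∈ m ^ (s a).2 := by
    intro a b hab
    induction b, hab using Nat.le_induction with
    | base => simp
    | succ b hab ih =>
      have h := Ideal.pow_le_pow_right (hmono.monotone hab) (hg1 b (s b))
      rw [← hs] at h
      simpa using add_mem h ih
  obtain ⟨L, hL⟩ := IsPrecomplete.prec (I := m) (M := A) inferInstance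
    (f := fun n => ((s n).1 : A)) (fun {a b} hab => by
      rw [SModEq.comm, SModEq.sub_mem]
      simpa using Ideal.pow_le_pow_right hmono.le_apply (hc a b hab))
  have hL' : ∀ n, L - (s n).1 ∈ m ^ (s n).2 := by
    intro n
    have h := (hL (s n).2).symm
    rw [SModEq.sub_mem] at h
    have h2 := hc n (s n).2 hmono.le_apply
    have h3 : L - ((s (s n).2).1 : A) ∈ m ^ (s n).2 := by simpa using h
    have h4 := add_mem h3 h2
    rwa [sub_add_sub_cancel] at h4
  have hLI : L ∈ I := by
    by_contra h
    obtain ⟨k, hk⟩ := cpa_closed I L h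
    refine hk (s k).1 ?_ (s k).1.2
    have := hL k
    rw [SModEq.sub_mem] at this
    simpa using this
  obtain ⟨i, hi⟩ := Set.mem_iUnion.mp (hI hLI)
  exact hg3 i (s i) L (hL' (i + 1)) hi
end

section
/- Let R be a commutative noetherian ring and S an associative ring equipped with an R-algebra structure such that S is finitely generated as an R-module. Then every family of pairwise orthogonal nonzero idempotents in S is finite. -/
/-- Let `R` be a commutative noetherian ring and `S` an associative `R`-algebra that
is finitely generated as an `R`-module. Then every family of pairwise orthogonal
nonzero idempotents in `S` is finite. -/
theorem finite_orthogonal_idempotents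
    (R : Type) [CommRing R] [IsNoetherianRing R]
    (S : Type) [Ring S] [Algebra R S] [Module.Finite R S]
    (E : Set S)
    (hidem : ∀ e ∈ E, e * e = e)
    (hne : ∀ e ∈ E, e ≠ 0)
    (horth : ∀ e ∈ E, ∀ f ∈ E, e ≠ f → e * f = 0 ∧ f * e = 0) :
    E.Finite := by
  have : IsNoetherian R S := isNoetherian_of_isNoetherianRing_of_finite R S
  have hind : iSupIndep (fun e : E => Submodule.span R {(e : S)}) := by
    intro e
    rw [Submodule.disjoint_def]
    intro x hx hx'
    obtain ⟨r, rfl⟩ := Submodule.mem_span_singleton.1 hx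
    have hle : (⨆ (j : E) (_ : j ≠ e), Submodule.span R {(j : S)}) ≤
        LinearMap.ker (LinearMap.mulLeft R (e : S)) := by
      refine iSup₂_le fun j hj => ?_
      rw [Submodule.span_singleton_le_iff_mem, LinearMap.mem_ker, LinearMap.mulLeft_apply]
      exact (horth e e.2 j j.2 fun h => hj (Subtype.ext h.symm)).1
    have h := hle hx'
    rw [LinearMap.mem_ker, LinearMap.mulLeft_apply, mul_smul_comm, hidem e e.2] at h
    exact h
  have hfin : Finite E := WellFoundedGT.finite_of_iSupIndep hind fun e h =>
    hne e e.2 (Submodule.span_singleton_eq_bot.1 h)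
  exact Set.toFinite E
end

section
/- Let R be a commutative noetherian ring and M a module over a ring S such that the endomorphism ring End_S(M) carries an R-algebra structure making it a finitely generated R-module. Then every direct sum decomposition of M into nonzero S-submodules has only finitely many summands; in particular, M has only finitely many indecomposable direct summands in any such decomposition. -/
/-- Let `R` be a commutative noetherian ring, `S` a ring, and `M` an `S`-module whose
endomorphism ring `End_S(M)` carries an `R`-algebra structure making it a finitely
generated `R`-module. Then every direct sum decomposition of `M` into nonzero
`S`-submodules has only finitely many summands. -/
theorem finite_summands_of_finite_endomorphism_ring
    (R : Type) [CommRing R] [IsNoetherianRing R]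
    (S : Type) [Ring S] (M : Type) [AddCommGroup M] [Module S M]
    [Algebra R (Module.End S M)] [Module.Finite R (Module.End S M)]
    (I : Type) [DecidableEq I] (N : I → Submodule S M)
    (hinternal : DirectSum.IsInternal N)
    (hne : ∀ i, N i ≠ ⊥) :
    Finite I := by
  classical
  let φ := LinearEquiv.ofBijective (DirectSum.coeLinearMap N) hinternal
  let e : I → Module.End S M := fun i =>
    (N i).subtype ∘ₗ DirectSum.component S I (fun i => N i) i ∘ₗ φ.symm.toLinearMap
  have hφ : ∀ i (x : N i), φ.symm (x : M) = DirectSum.lof S I (fun i => N i) i x := by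
    intro i x
    rw [LinearEquiv.symm_apply_eq]
    exact (DirectSum.coeLinearMap_lof N i x).symm
  have he1 : ∀ i, e i * e i = e i := by
    intro i
    ext m
    simp only [e, Module.End.mul_apply, LinearMap.comp_apply, Submodule.subtype_apply,
      LinearEquiv.coe_coe, hφ]
    rw [DirectSum.component.lof_self]
  have he2 : ∀ i j, j ≠ i → e i * e j = 0 := by
    intro i j hij
    ext m
    simp only [e, Module.End.mul_apply, LinearMap.comp_apply, Submodule.subtype_apply,
      LinearEquiv.coe_coe, hφ]
    rw [DirectSum.component.of, dif_neg hij]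
    simp
  have he0 : ∀ i, e i ≠ 0 := by
    intro i h
    apply hne i
    rw [Submodule.eq_bot_iff]
    intro x hx
    have h1 : e i x = x := by
      have := hφ i ⟨x, hx⟩
      simp only at this
      simp only [e, LinearMap.comp_apply, Submodule.subtype_apply, LinearEquiv.coe_coe, this]
      rw [DirectSum.component.lof_self]
    rw [← h1, h]
    rfl
  haveI : IsNoetherian R (Module.End S M) := isNoetherian_of_isNoetherianRing_of_finite R _
  have hind : iSupIndep (fun i => Submodule.span R {e i}) := by
    intro i
    rw [Submodule.disjoint_def]
    intro x hx hx'
    obtain ⟨r, rfl⟩ := Submodule.mem_span_singleton.1 hx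
    have hle : (⨆ j, ⨆ (_ : j ≠ i), Submodule.span R {e j}) ≤
        LinearMap.ker (LinearMap.mulLeft R (e i)) := by
      refine iSup₂_le fun j hj => ?_
      rw [Submodule.span_singleton_le_iff_mem, LinearMap.mem_ker, LinearMap.mulLeft_apply]
      exact he2 i j hj
    have := hle hx'
    rw [LinearMap.mem_ker, LinearMap.mulLeft_apply, mul_smul_comm, he1] at this
    exact this
  exact WellFoundedGT.finite_of_iSupIndep hind fun i h =>
    he0 i (Submodule.span_singleton_eq_bot.1 h)
end
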